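/- For every m >= 3, the 2m-dimensional Lebesgue volume of Q(C_m) equals m * A_{2m-1} / (2^m * (2m)!), where A_{2m-1} is the Euler number counting alternating permutations of {1, ..., 2m-1}. -/

import Mathlib

open MeasureTheory Filter

noncomputable section

/-- The standard relaxation `Q(G)` of the boolean quadric polytope of a graph `G`:
the set of points of `[0,1]^(V + E)` satisfying, for each edge `(i,j)`,
`0 ≤ y_{ij}`, `y_{ij} ≤ x_i`, `y_{ij} ≤ x_j` and `x_i + x_j ≤ 1 + y_{ij}`. -/
def QSet {V : Type*} (G : SimpleGraph V) : Set ((V → ℝ) × (↥G.edgeSet → ℝ)) :=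
  {p | (∀ i, p.1 i ∈ Set.Icc (0 : ℝ) 1) ∧ (∀ e, p.2 e ∈ Set.Icc (0 : ℝ) 1) ∧
    ∀ (i j : V) (h : G.Adj i j),
      0 ≤ p.2 ⟨s(i, j), (SimpleGraph.mem_edgeSet _).mpr h⟩ ∧
      p.2 ⟨s(i, j), (SimpleGraph.mem_edgeSet _).mpr h⟩ ≤ p.1 i ∧
      p.2 ⟨s(i, j), (SimpleGraph.mem_edgeSet _).mpr h⟩ ≤ p.1 j ∧
      p.1 i + p.1 j ≤ 1 + p.2 ⟨s(i, j), (SimpleGraph.mem_edgeSet _).mpr h⟩}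

/-- The Euler number `A k`: the number of alternating permutations `σ` of
`{1, …, k}`, i.e. with `σ 1 > σ 2 < σ 3 > σ 4 < ⋯` (here written 0-indexed). -/
def eulerNumber (k : ℕ) : ℕ :=
  Nat.card {σ : Equiv.Perm (Fin k) //
    ∀ (i : ℕ) (h : i + 1 < k),
      (Even i → σ ⟨i + 1, h⟩ < σ ⟨i, Nat.lt_of_succ_lt h⟩) ∧
      (Odd i → σ ⟨i, Nat.lt_of_succ_lt h⟩ < σ ⟨i + 1, h⟩)}

/-- The cycle `C_m` with `m` vertices and (for `m ≥ 3`) `m` edges. -/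
def cycleG (m : ℕ) : SimpleGraph (Fin m) :=
  SimpleGraph.fromRel (fun i j => ((i : ℕ) + 1) % m = (j : ℕ))

instance (m : ℕ) : DecidableRel (cycleG m).Adj := fun i j =>
  decidable_of_iff _ (SimpleGraph.fromRel_adj _ i j).symm


def ordCell {ι : Type*} {n : ℕ} (σ : ι ≃ Fin n) : Set (ι → ℝ) :=
  {z | (∀ i, z i ∈ Set.Icc (0:ℝ) 1) ∧ ∀ i j, σ i < σ j → z i < z j}

lemma measurableSet_ordCell {ι : Type*} [Fintype ι] {n : ℕ} (σ : ι ≃ Fin n) :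
    MeasurableSet (ordCell σ) := by
  have : ordCell σ = (⋂ i, {z : ι → ℝ | z i ∈ Set.Icc (0:ℝ) 1}) ∩
      ⋂ i, ⋂ j, ⋂ (_ : σ i < σ j), {z : ι → ℝ | z i < z j} := by
    ext z; simp [ordCell]
  rw [this]
  refine MeasurableSet.inter (MeasurableSet.iInter fun i => ?_) ?_
  · exact (measurable_pi_apply i) measurableSet_Icc
  · refine MeasurableSet.iInter fun i => MeasurableSet.iInter fun j => MeasurableSet.iInter fun _ => ?_
    exact measurableSet_lt (measurable_pi_apply i) (measurable_pi_apply j)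

lemma disjoint_ordCell {ι : Type*} {n : ℕ} {σ τ : ι ≃ Fin n} (h : σ ≠ τ) :
    Disjoint (ordCell σ) (ordCell τ) := by
  rw [Set.disjoint_left]
  intro z hz hzz
  apply h
  have key : ∀ (σ τ : ι ≃ Fin n), z ∈ ordCell σ → z ∈ ordCell τ → ∀ i j, σ i < σ j → τ i < τ j := by
    intro σ τ h1 h2 i j hij
    by_contra hc
    have hne : τ j ≠ τ i := fun e => by
      have := τ.injective e; subst this; exact lt_irrefl _ hij
    have := h2.2 j i (lt_of_le_of_ne (not_lt.1 hc) hne)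
    exact lt_asymm this (h1.2 i j hij)
  have hm : StrictMono (fun x => τ (σ.symm x)) := by
    intro x y hxy
    exact key σ τ hz hzz _ _ (by simpa using hxy)
  have h2 : (fun x => τ (σ.symm x)) = id := by
    have hf : (StrictMono.orderIsoOfSurjective _ hm ((τ.surjective).comp σ.symm.surjective)) = OrderIso.refl _ :=
      Subsingleton.elim _ _
    funext x
    exact congrArg (fun e : Fin n ≃o Fin n => e x) hf
  ext i
  have := congrFun h2 (σ i)
  simp at this
  rw [this]

lemma exists_ordCell {ι : Type*} [Fintype ι] {n : ℕ} (hn : Fintype.card ι = n) (z : ι → ℝ)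
    (hz : ∀ i, z i ∈ Set.Icc (0:ℝ) 1) (hi : Function.Injective z) :
    ∃ σ : ι ≃ Fin n, z ∈ ordCell σ := by
  let _ : LinearOrder ι := LinearOrder.lift' z hi
  let e := Fintype.orderIsoFinOfCardEq ι hn
  refine ⟨e.symm.toEquiv, hz, fun i j hij => ?_⟩
  have : i < j := e.symm.lt_iff_lt.1 hij
  exact this

lemma ae_injective {ι : Type*} [Fintype ι] : ∀ᵐ z : ι → ℝ, Function.Injective z := by
  have : ∀ᵐ z : ι → ℝ, ∀ i j, i ≠ j → z i ≠ z j := by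
    simp only [ae_all_iff]
    intro i j hij
    classical
    let S : Submodule ℝ (ι → ℝ) := LinearMap.ker (LinearMap.proj (R := ℝ) (φ := fun _ : ι => ℝ) i - LinearMap.proj j)
    have hS : S ≠ ⊤ := by
      intro h
      have : (Pi.single i 1 : ι → ℝ) ∈ S := by rw [h]; trivial
      simp [S, hij.symm] at this
    have := Measure.addHaar_submodule volume S hS
    rw [ae_iff]
    convert this using 2
    ext z
    simp [S, sub_eq_zero]
  filter_upwards [this] with z hz i j h
  by_contra hc
  exact hz i j hc h

lemma volume_ordCell_eq {ι : Type*} [Fintype ι] {n : ℕ} (σ : ι ≃ Fin n) :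
    volume (ordCell σ) = volume (ordCell (Equiv.refl (Fin n))) := by
  have h := volume_measurePreserving_piCongrLeft (fun _ : Fin n => ℝ) σ
  rw [← h.measure_preimage_equiv]
  congr 1
  ext z
  simp only [ordCell, Set.mem_preimage, Set.mem_ofPred_eq]
  have hv : ∀ i, (MeasurableEquiv.piCongrLeft (fun _ : Fin n => ℝ) σ) z i = z (σ.symm i) := by
    intro i
    obtain ⟨j, rfl⟩ := σ.surjective i
    simp [MeasurableEquiv.piCongrLeft, Equiv.piCongrLeft_apply_apply]
  simp only [hv, Equiv.refl_apply]
  constructor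
  · rintro ⟨h1, h2⟩
    exact ⟨fun i => h1 _, fun i j hij => h2 _ _ (by simpa using hij)⟩
  · rintro ⟨h1, h2⟩
    exact ⟨fun i => by simpa using h1 (σ i), fun i j hij => by simpa using h2 _ _ hij⟩

lemma volume_linext {ι : Type*} [Fintype ι] {n : ℕ} (hn : Fintype.card ι = n) (p : (ι ≃ Fin n) → Prop)
    (S : Set (ι → ℝ)) (hS : ∀ z ∈ S, ∀ i, z i ∈ Set.Icc (0:ℝ) 1)
    (hp : ∀ σ, ∀ z ∈ ordCell σ, z ∈ S ↔ p σ) :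
    volume S = (Nat.card {σ // p σ} : ENNReal) * volume (ordCell (Equiv.refl (Fin n))) := by
  classical
  have : S =ᵐ[volume] ⋃ σ : {σ // p σ}, ordCell σ.1 := by
    filter_upwards [ae_injective (ι := ι)] with z hz
    apply propext
    change z ∈ S ↔ z ∈ ⋃ σ : {σ // p σ}, ordCell σ.1
    simp only [Set.mem_iUnion]
    constructor
    · intro h
      obtain ⟨σ, hσ⟩ := exists_ordCell hn z (hS z h) hz
      exact ⟨⟨σ, (hp σ z hσ).1 h⟩, hσ⟩
    · rintro ⟨σ, hσ⟩
      exact (hp _ z hσ).2 σ.2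
  rw [measure_congr this, measure_iUnion]
  · simp [volume_ordCell_eq, tsum_fintype, Nat.card_eq_fintype_card]
  · intro a b hab
    exact disjoint_ordCell (fun h => hab (Subtype.ext h))
  · intro a; exact measurableSet_ordCell _

lemma volume_ordCell (n : ℕ) : volume (ordCell (Equiv.refl (Fin n))) = (n.factorial : ENNReal)⁻¹ := by
  have h := volume_linext (ι := Fin n) (n := n) (by simp) (fun _ => True)
    {z | ∀ i, z i ∈ Set.Icc (0:ℝ) 1} (fun z hz => hz) (fun σ z hz => by simpa using hz.1)
  have h1 : volume {z : Fin n → ℝ | ∀ i, z i ∈ Set.Icc (0:ℝ) 1} = 1 := by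
    have : {z : Fin n → ℝ | ∀ i, z i ∈ Set.Icc (0:ℝ) 1} = Set.univ.pi fun _ => Set.Icc (0:ℝ) 1 := by
      ext; simp only [Set.mem_univ_pi]; rfl
    rw [this, volume_pi_pi]; simp
  rw [h1] at h
  have h2 : Nat.card {σ : Fin n ≃ Fin n // True} = n.factorial := by
    rw [Nat.card_congr (Equiv.subtypeUnivEquiv (fun _ => trivial)), Nat.card_eq_fintype_card]
    simpa using Fintype.card_perm (α := Fin n)
  rw [h2] at h
  exact ENNReal.eq_inv_of_mul_eq_one_left (by rw [mul_comm]; exact h.symm)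

def cfence (m : ℕ) [NeZero m] (σ : Fin m ⊕ Fin m ≃ Fin (2*m)) : Prop :=
  ∀ i : Fin m, σ (.inr i) < σ (.inl i) ∧ σ (.inr i) < σ (.inl (i+1))

def altPred (k : ℕ) (σ : Equiv.Perm (Fin k)) : Prop :=
   ∀ (i : ℕ) (h : i + 1 < k),
      (Even i → σ ⟨i + 1, h⟩ < σ ⟨i, Nat.lt_of_succ_lt h⟩) ∧
      (Odd i → σ ⟨i, Nat.lt_of_succ_lt h⟩ < σ ⟨i + 1, h⟩)

/-- rotation of the doubled index set -/
def rotE (m : ℕ) [NeZero m] (c : Fin m) : Fin m ⊕ Fin m ≃ Fin m ⊕ Fin m :=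
  Equiv.sumCongr (Equiv.addRight c) (Equiv.addRight c)

lemma cfence_rot (m : ℕ) [NeZero m] (c : Fin m) (σ) (h : cfence m σ) :
    cfence m ((rotE m c).trans σ) := by
  intro i
  have h1 := h (i + c)
  refine ⟨by simpa [rotE] using h1.1, ?_⟩
  have : i + 1 + c = i + c + 1 := by rw [add_right_comm]
  simpa [rotE, this] using h1.2

lemma card_top (m : ℕ) [NeZero m] (t : Fin (2*m)) (c : Fin m) :
    Nat.card {σ // cfence m σ ∧ σ (.inl c) = t} = Nat.card {σ // cfence m σ ∧ σ (.inl 0) = t} := by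
  refine Nat.card_congr ⟨fun σ => ⟨(rotE m c).trans σ.1, cfence_rot _ _ _ σ.2.1, ?_⟩,
    fun σ => ⟨(rotE m (-c)).trans σ.1, cfence_rot _ _ _ σ.2.1, ?_⟩, ?_, ?_⟩
  · simpa [rotE] using σ.2.2
  · simpa [rotE] using σ.2.2
  · intro σ; ext x; rcases x with x | x <;> simp [rotE]
  · intro σ; ext x; rcases x with x | x <;> simp [rotE]

lemma card_cfence (m : ℕ) [NeZero m] (t : Fin (2*m)) (ht : ∀ s, s ≤ t) :
    Nat.card {σ // cfence m σ} = m * Nat.card {σ // cfence m σ ∧ σ (.inl 0) = t} := by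
  classical
  have e : {σ // cfence m σ} ≃ Σ c : Fin m, {σ // cfence m σ ∧ σ (.inl c) = t} := by
    have hx : ∀ σ : {σ // cfence m σ}, ∃ c, σ.1 (.inl c) = t := by
      intro σ
      obtain ⟨x, hx⟩ := σ.1.surjective t
      rcases x with x | x
      · exact ⟨x, hx⟩
      · have := (σ.2 x).1
        rw [hx] at this
        exact absurd this (not_lt.2 (ht _))
    choose f hf using hx
    refine ⟨fun σ => ⟨f σ, σ.1, σ.2, hf σ⟩, fun p => ⟨p.2.1, p.2.2.1⟩, fun σ => rfl, ?_⟩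
    rintro ⟨c, σ, h1, h2⟩
    have : f ⟨σ, h1⟩ = c := by
      have := hf ⟨σ, h1⟩
      rw [← h2] at this
      simpa using this
    subst this
    rfl
  rw [Nat.card_congr e, Nat.card_sigma]
  rw [Finset.sum_congr rfl (fun c _ => card_top m t c)]
  simp

def posFun (k : ℕ) : Option (Fin (2*k+1)) → Fin (k+1) ⊕ Fin (k+1)
  | none => .inl 0
  | some p => if h : p.1 % 2 = 0 then .inr ⟨p.1/2, by omega⟩ else .inl ⟨p.1/2+1, by omega⟩

lemma posFun_bij (k : ℕ) : Function.Bijective (posFun k) := by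
  rw [Fintype.bijective_iff_injective_and_card]
  constructor
  · rintro (_|p) (_|q) h
    · rfl
    · simp only [posFun] at h
      split_ifs at h
      simp [Fin.ext_iff] at h
    · simp only [posFun] at h
      split_ifs at h
      simp [Fin.ext_iff] at h
    · simp only [posFun] at h
      congr 1
      ext
      split_ifs at h <;> simp [Fin.ext_iff] at h <;> omega
  · simp; omega

def posE (k : ℕ) : Option (Fin (2*k+1)) ≃ Fin (k+1) ⊕ Fin (k+1) := Equiv.ofBijective _ (posFun_bij k)

def mkE (k : ℕ) (τ : Equiv.Perm (Fin (2*k+1))) : Fin (k+1) ⊕ Fin (k+1) ≃ Fin (2*(k+1)) :=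
  (posE k).symm.trans ((Equiv.optionCongr (τ.trans Fin.revPerm)).trans finSuccEquivLast.symm)

lemma mkE_none (k τ) : mkE k τ (.inl 0) = Fin.last (2*k+1) := by
  have : (Sum.inl 0 : Fin (k+1) ⊕ Fin (k+1)) = posE k none := rfl
  rw [this]; simp only [mkE, Equiv.trans_apply, Equiv.symm_apply_apply]; simp

lemma mkE_some (k τ) (p) : mkE k τ (posE k (some p)) = (Fin.rev (τ p)).castSucc := by
  simp only [mkE, Equiv.trans_apply, Equiv.symm_apply_apply]; simp

lemma mkE_inr (k τ) (i : Fin (k+1)) : mkE k τ (.inr i) = (Fin.rev (τ ⟨2*i, by omega⟩)).castSucc := by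
  rw [← mkE_some]; congr 1
  simp [posE, posFun]

lemma mkE_inl (k τ) (i : ℕ) (hi : i + 1 < k + 1) :
    mkE k τ (.inl ⟨i+1, hi⟩) = (Fin.rev (τ ⟨2*i+1, by omega⟩)).castSucc := by
  rw [← mkE_some]; congr 1
  simp [posE, posFun, Nat.add_mod]
  omega

lemma mkE_surj (k) (σ : Fin (k+1) ⊕ Fin (k+1) ≃ Fin (2*(k+1))) (h : σ (.inl 0) = Fin.last (2*k+1)) :
    ∃ τ, mkE k τ = σ := by
  let ρ : Equiv.Perm (Option (Fin (2*k+1))) := (posE k).trans (σ.trans (finSuccEquivLast (n := 2*k+1)))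
  have h0 : ρ none = none := by
    have : posE k none = (Sum.inl 0 : Fin (k+1) ⊕ Fin (k+1)) := rfl
    simp only [ρ, Equiv.trans_apply, this, h]; simp
  have h1 : Equiv.optionCongr (Equiv.removeNone ρ) = ρ := by
    ext1 x
    rcases x with _ | x
    · simp [h0]
    · simp only [Equiv.optionCongr_apply, Option.map_some]
      refine Equiv.removeNone_some ρ ?_
      rcases hx : ρ (some x) with _ | y
      · rw [← h0] at hx
        simpa using ρ.injective hx
      · exact ⟨y, rfl⟩
  refine ⟨(Equiv.removeNone ρ).trans Fin.revPerm, ?_⟩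
  have : ((Equiv.removeNone ρ).trans Fin.revPerm).trans Fin.revPerm = Equiv.removeNone ρ := by
    ext x; simp
  unfold mkE
  rw [this, h1]
  ext x
  simp [ρ]

lemma mkE_inj (k) : Function.Injective (mkE k) := by
  intro a b h
  ext p
  have := mkE_some k a p
  rw [h, mkE_some] at this
  have h2 : a p = b p := by simpa using this.symm
  rw [h2]

lemma mkE_cfence (k τ) : cfence (k+1) (mkE k τ) ↔ altPred (2*k+1) τ := by
  constructor
  · intro h i hi
    constructor
    · rintro ⟨j, rfl⟩
      have h2 := (h ⟨j, by omega⟩).2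
      have e : (⟨j, by omega⟩ + 1 : Fin (k+1)) = ⟨j+1, by omega⟩ := by
        ext; simp [Fin.val_add]; omega
      rw [e, mkE_inr, mkE_inl] at h2
      simp only [Fin.castSucc_lt_castSucc_iff, Fin.rev_lt_rev] at h2
      convert h2 using 3 <;> congr 1 <;> omega
    · rintro ⟨j, rfl⟩
      have h2 := (h ⟨j+1, by omega⟩).1
      rw [mkE_inr, mkE_inl] at h2
      simp only [Fin.castSucc_lt_castSucc_iff, Fin.rev_lt_rev] at h2
      exact h2
  · intro h i
    constructor
    · rcases i with ⟨_ | j, hj⟩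
      · have : (⟨0, hj⟩ : Fin (k+1)) = 0 := rfl
        rw [this, mkE_none, mkE_inr]
        exact Fin.castSucc_lt_last _
      · rw [mkE_inr, mkE_inl]
        simp only [Fin.castSucc_lt_castSucc_iff, Fin.rev_lt_rev]
        have := (h (2*j+1) (by omega)).2 ⟨j, rfl⟩
        exact this
    · rcases i with ⟨j, hj⟩
      by_cases hk : j + 1 < k + 1
      · have e : (⟨j, hj⟩ + 1 : Fin (k+1)) = ⟨j+1, hk⟩ := by
          ext; simp [Fin.val_add]; omega
        rw [e, mkE_inr, mkE_inl]
        simp only [Fin.castSucc_lt_castSucc_iff, Fin.rev_lt_rev]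
        exact (h (2*j) (by omega)).1 ⟨j, by omega⟩
      · have e : (⟨j, hj⟩ + 1 : Fin (k+1)) = 0 := by
          have : j = k := by omega
          subst this
          ext; simp [Fin.val_add]
        rw [e, mkE_none, mkE_inr]
        exact Fin.castSucc_lt_last _

lemma card_cfence_eq (k : ℕ) :
    Nat.card {σ // cfence (k+1) σ} = (k+1) * Nat.card {τ // altPred (2*k+1) τ} := by
  rw [card_cfence (k+1) (Fin.last (2*k+1)) (fun s => Fin.le_last _)]
  congr 1
  symm
  refine Nat.card_congr (Equiv.ofBijective (fun τ => ⟨mkE k τ.1, (mkE_cfence k _).2 τ.2, mkE_none _ _⟩) ⟨?_, ?_⟩)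
  · intro a b h
    exact Subtype.ext (mkE_inj k (congrArg Subtype.val h))
  · rintro ⟨σ, h1, h2⟩
    obtain ⟨τ, rfl⟩ := mkE_surj k σ h2
    exact ⟨⟨τ, (mkE_cfence k _).1 h1⟩, rfl⟩

def tent (x : ℝ) : ℝ := min (2*x) (2-2*x)

lemma measurable_tent : Measurable tent := by unfold tent; fun_prop

lemma tent_mp : MeasurePreserving tent (volume.restrict (Set.Icc (0:ℝ) 1)) (volume.restrict (Set.Icc (0:ℝ) 1)) := by
  refine ⟨measurable_tent, ?_⟩
  have : IsFiniteMeasure (Measure.map tent (volume.restrict (Set.Icc (0:ℝ) 1))) :=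
    Measure.isFiniteMeasure_map _ _
  refine Measure.ext_of_Iic _ _ fun a => ?_
  rw [Measure.map_apply measurable_tent measurableSet_Iic,
    Measure.restrict_apply (measurable_tent measurableSet_Iic), Measure.restrict_apply measurableSet_Iic]
  rcases lt_or_ge a 0 with ha | ha
  · have e1 : tent ⁻¹' Set.Iic a ∩ Set.Icc 0 1 = ∅ := by
      ext x
      simp only [tent, Set.mem_inter_iff, Set.mem_preimage, Set.mem_Iic, Set.mem_Icc, min_le_iff, Set.mem_empty_iff_false, iff_false]
      rintro ⟨h | h, h1, h2⟩ <;> linarith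
    have e2 : Set.Iic a ∩ Set.Icc 0 1 = ∅ := by
      ext x
      simp only [Set.mem_inter_iff, Set.mem_Iic, Set.mem_Icc, Set.mem_empty_iff_false, iff_false]
      rintro ⟨h, h1, h2⟩; linarith
    rw [e1, e2]
  rcases lt_or_ge a 1 with ha1 | ha1
  · have e1 : tent ⁻¹' Set.Iic a ∩ Set.Icc 0 1 = Set.Icc 0 (a/2) ∪ Set.Icc (1-a/2) 1 := by
      ext x
      simp only [tent, Set.mem_inter_iff, Set.mem_preimage, Set.mem_Iic, Set.mem_Icc, min_le_iff, Set.mem_union]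
      constructor
      · rintro ⟨h | h, h1, h2⟩
        · left; constructor <;> linarith
        · right; constructor <;> linarith
      · rintro (⟨h1, h2⟩ | ⟨h1, h2⟩)
        · refine ⟨Or.inl ?_, ?_, ?_⟩ <;> linarith
        · refine ⟨Or.inr ?_, ?_, ?_⟩ <;> linarith
    have e2 : Set.Iic a ∩ Set.Icc 0 1 = Set.Icc 0 a := by
      ext x
      simp only [Set.mem_inter_iff, Set.mem_Iic, Set.mem_Icc]
      constructor
      · rintro ⟨h, h1, h2⟩; constructor <;> linarith
      · rintro ⟨h1, h2⟩; refine ⟨?_, ?_, ?_⟩ <;> linarith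
    rw [e1, e2, measure_union _ measurableSet_Icc]
    · simp only [Real.volume_Icc]
      rw [← ENNReal.ofReal_add (by linarith) (by linarith)]
      congr 1; ring
    · rw [Set.disjoint_left]
      rintro x ⟨h1, h2⟩ ⟨h3, h4⟩
      linarith
  · have e1 : tent ⁻¹' Set.Iic a ∩ Set.Icc 0 1 = Set.Icc 0 1 := by
      ext x
      simp only [tent, Set.mem_inter_iff, Set.mem_preimage, Set.mem_Iic, Set.mem_Icc, min_le_iff, and_iff_right_iff_imp]
      rintro ⟨h1, h2⟩
      rcases le_total x (1/2) with h | h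
      · left; linarith
      · right; linarith
    have e2 : Set.Iic a ∩ Set.Icc 0 1 = Set.Icc 0 1 := by
      ext x
      simp only [Set.mem_inter_iff, Set.mem_Iic, Set.mem_Icc, and_iff_right_iff_imp]
      rintro ⟨h1, h2⟩; linarith
    rw [e1, e2]

def Qcyc (m : ℕ) [NeZero m] : Set ((Fin m → ℝ) × (Fin m → ℝ)) :=
  {p | ∀ i, 0 ≤ p.2 i ∧ p.2 i ≤ p.1 i ∧ p.2 i ≤ p.1 (i+1) ∧ p.1 i + p.1 (i+1) ≤ 1 + p.2 i}

def Zcyc (m : ℕ) [NeZero m] : Set ((Fin m → ℝ) × (Fin m → ℝ)) :=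
  {p | (∀ i, p.1 i ∈ Set.Icc (0:ℝ) 1) ∧ ∀ i, 0 ≤ p.2 i ∧ p.2 i ≤ p.1 i ∧ p.2 i ≤ p.1 (i+1)}

lemma meas_Qcyc (m : ℕ) [NeZero m] : MeasurableSet (Qcyc m) := by
  have : Qcyc m = ⋂ i, ({p | 0 ≤ p.2 i} ∩ ({p | p.2 i ≤ p.1 i} ∩ ({p | p.2 i ≤ p.1 (i+1)} ∩
      {p | p.1 i + p.1 (i+1) ≤ 1 + p.2 i}))) := by
    ext z; simp [Qcyc]
  rw [this]
  refine MeasurableSet.iInter fun i => .inter ?_ (.inter ?_ (.inter ?_ ?_)) <;>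
    apply measurableSet_le <;> fun_prop

lemma meas_Zcyc (m : ℕ) [NeZero m] : MeasurableSet (Zcyc m) := by
  have : Zcyc m = (⋂ i, ({p | 0 ≤ p.1 i} ∩ {p | p.1 i ≤ 1})) ∩ ⋂ i, ({p | 0 ≤ p.2 i} ∩ ({p | p.2 i ≤ p.1 i} ∩ ({p | p.2 i ≤ p.1 (i+1)}))) := by
    ext z; simp [Zcyc]
  rw [this]
  refine .inter (MeasurableSet.iInter fun i => .inter ?_ ?_) (MeasurableSet.iInter fun i => .inter ?_ (.inter ?_ ?_)) <;>
    apply measurableSet_le <;> fun_prop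

def FF (m : ℕ) [NeZero m] (u : Fin m → ℝ) : ENNReal := ∏ i, ENNReal.ofReal (min (u i) (u (i+1)))

lemma measurable_FF (m : ℕ) [NeZero m] : Measurable (FF m) := by
  unfold FF
  fun_prop

lemma vol_Qcyc (m : ℕ) [NeZero m] : volume (Qcyc m) = ∫⁻ x : Fin m → ℝ, ENNReal.ofReal (1/2) ^ m * FF m (fun i => tent (x i)) := by
  rw [Measure.volume_eq_prod, Measure.prod_apply (meas_Qcyc m)]
  refine lintegral_congr fun x => ?_
  have : Prod.mk x ⁻¹' Qcyc m = Set.univ.pi fun i => Set.Icc (max 0 (x i + x (i+1) - 1)) (min (x i) (x (i+1))) := by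
    ext y
    simp only [Qcyc, Set.mem_preimage, Set.mem_univ_pi, Set.mem_Icc, max_le_iff, le_min_iff]
    refine forall_congr' fun i => ?_
    constructor
    · rintro ⟨h1, h2, h3, h4⟩; exact ⟨⟨h1, by linarith⟩, h2, h3⟩
    · rintro ⟨⟨h1, h4⟩, h2, h3⟩; exact ⟨h1, h2, h3, by linarith⟩
  rw [this, volume_pi_pi, FF]
  have h3 : ENNReal.ofReal (1/2) ^ m = ∏ i : Fin m, ENNReal.ofReal (1/2) := by simp
  rw [h3, ← Finset.prod_mul_distrib]
  refine Finset.prod_congr rfl fun i _ => ?_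
  rw [Real.volume_Icc, ← ENNReal.ofReal_mul (by norm_num)]
  congr 1
  unfold tent
  generalize x i = a
  generalize x (i+1) = b
  rcases le_total a b with h1 | h1 <;> rcases le_total 0 (a+b-1) with h2 | h2 <;>
  rcases le_total (2*a) (2-2*a) with h3 | h3 <;> rcases le_total (2*b) (2-2*b) with h4 | h4 <;>
  simp only [h1, h2, h3, h4, min_eq_left, min_eq_right, max_eq_left, max_eq_right] <;>
  first 
  | (rw [min_eq_left (by linarith)]; linarith)
  | (rw [min_eq_right (by linarith)]; linarith)

lemma vol_Zcyc (m : ℕ) [NeZero m] : volume (Zcyc m) = ∫⁻ x, FF m x ∂(Measure.pi fun _ : Fin m => (volume.restrict (Set.Icc (0:ℝ) 1))) := by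
  rw [Measure.volume_eq_prod, Measure.prod_apply (meas_Zcyc m), ← Measure.restrict_pi_pi, ← volume_pi,
    ← lintegral_indicator (MeasurableSet.univ_pi fun _ => measurableSet_Icc)]
  refine lintegral_congr fun x => ?_
  by_cases hx : x ∈ Set.univ.pi fun _ : Fin m => Set.Icc (0:ℝ) 1
  · rw [Set.indicator_of_mem hx]
    have : Prod.mk x ⁻¹' Zcyc m = Set.univ.pi fun i => Set.Icc 0 (min (x i) (x (i+1))) := by
      ext y
      rw [Set.mem_univ_pi] at hx
      simp only [Zcyc, Set.mem_preimage, Set.mem_univ_pi, le_min_iff]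
      constructor
      · intro h i; exact ⟨(h.2 i).1, le_min (h.2 i).2.1 (h.2 i).2.2⟩
      · intro h; exact ⟨hx, fun i => ⟨(h i).1, le_min_iff.1 (h i).2⟩⟩
    rw [this, volume_pi_pi, FF]
    simp
  · rw [Set.indicator_of_notMem hx]
    have : Prod.mk x ⁻¹' Zcyc m = ∅ := by
      rw [Set.eq_empty_iff_forall_notMem]
      intro y hy
      exact hx (Set.mem_univ_pi.2 hy.1)
    rw [this]; simp

lemma tent_neg {x : ℝ} (h : x ∉ Set.Icc (0:ℝ) 1) : tent x ≤ 0 := by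
  unfold tent
  by_contra hc
  push Not at hc
  rw [lt_min_iff] at hc
  exact h ⟨by linarith, by linarith⟩

lemma vol_QZ (m : ℕ) [NeZero m] : volume (Qcyc m) = ENNReal.ofReal (1/2) ^ m * volume (Zcyc m) := by
  have hmp : MeasurePreserving (fun (x : Fin m → ℝ) i => tent (x i))
     (Measure.pi fun _ : Fin m => (volume.restrict (Set.Icc (0:ℝ) 1)))
     (Measure.pi fun _ : Fin m => (volume.restrict (Set.Icc (0:ℝ) 1))) :=
    measurePreserving_pi _ _ (fun _ => tent_mp)
  have hmeas : Measurable fun x : Fin m → ℝ => FF m (fun i => tent (x i)) :=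
    (measurable_FF m).comp hmp.measurable
  rw [vol_Qcyc, vol_Zcyc, lintegral_const_mul _ hmeas,
    ← hmp.lintegral_comp (measurable_FF m)]
  congr 1
  rw [← Measure.restrict_pi_pi, ← volume_pi, ← lintegral_indicator (MeasurableSet.univ_pi fun _ => measurableSet_Icc)]
  refine lintegral_congr fun x => ?_
  by_cases hx : x ∈ Set.univ.pi fun _ : Fin m => Set.Icc (0:ℝ) 1
  · rw [Set.indicator_of_mem hx]
  · rw [Set.indicator_of_notMem hx]
    rw [Set.mem_univ_pi] at hx
    push Not at hx
    obtain ⟨i, hi⟩ := hx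
    exact Finset.prod_eq_zero (Finset.mem_univ i)
      (ENNReal.ofReal_eq_zero.2 ((min_le_left _ _).trans (tent_neg hi)))

lemma val_succ {m : ℕ} [NeZero m] (hm : 3 ≤ m) (i : Fin m) : ((i + 1 : Fin m) : ℕ) = (i + 1) % m := by
  rw [Fin.val_add, Fin.val_one', Nat.add_mod_mod]

lemma adj_succ {m : ℕ} [NeZero m] (hm : 3 ≤ m) (i : Fin m) : (cycleG m).Adj i (i+1) := by
  rw [cycleG, SimpleGraph.fromRel_adj]
  refine ⟨?_, Or.inl (val_succ hm i).symm⟩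
  intro h
  have := congrArg Fin.val h
  rw [val_succ hm] at this
  have hi := i.2
  rcases Nat.lt_or_ge (i+1) m with h | h
  · rw [Nat.mod_eq_of_lt h] at this; omega
  · have : (i:ℕ)+1 = m := by omega
    simp_all

def edgeF {m : ℕ} [NeZero m] (hm : 3 ≤ m) (i : Fin m) : (cycleG m).edgeSet :=
  ⟨s(i, i+1), (SimpleGraph.mem_edgeSet _).mpr (adj_succ hm i)⟩

lemma adj_cases {m : ℕ} [NeZero m] (hm : 3 ≤ m) {i j : Fin m} (h : (cycleG m).Adj i j) : j = i + 1 ∨ i = j + 1 := by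
  rw [cycleG, SimpleGraph.fromRel_adj] at h
  rcases h.2 with h | h
  · left; ext; rw [val_succ hm, h]
  · right; ext; rw [val_succ hm, h]

lemma edgeF_bij {m : ℕ} [NeZero m] (hm : 3 ≤ m) : Function.Bijective (edgeF (m := m) hm) := by
  constructor
  · intro i j h
    have hh : s(i, i+1) = s(j, j+1) := congrArg Subtype.val h
    rw [Sym2.eq_iff] at hh
    rcases hh with hh | ⟨h1, h2⟩
    · exact hh.1
    · exfalso
      have a := congrArg Fin.val h1
      have b := congrArg Fin.val h2
      rw [val_succ hm] at a b
      have hi := i.2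
      have hj := j.2
      rcases Nat.lt_or_ge (i+1) m with h | h <;> rcases Nat.lt_or_ge (j+1) m with hh | hh
      · rw [Nat.mod_eq_of_lt h] at b; rw [Nat.mod_eq_of_lt hh] at a; omega
      · have : (j:ℕ)+1 = m := by omega
        rw [Nat.mod_eq_of_lt h] at b; rw [this, Nat.mod_self] at a; omega
      · have : (i:ℕ)+1 = m := by omega
        rw [Nat.mod_eq_of_lt hh] at a; rw [this, Nat.mod_self] at b; omega
      · have : (j:ℕ)+1 = m := by omega
        rw [this, Nat.mod_self] at a; omega
  · rintro ⟨e, he⟩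
    induction e with
    | _ i j =>
      rcases adj_cases hm ((SimpleGraph.mem_edgeSet _).1 he) with h | h
      · exact ⟨i, Subtype.ext (by simp [edgeF, h])⟩
      · exact ⟨j, Subtype.ext (by simp [edgeF, h, Sym2.eq_swap])⟩

def edgeE {m : ℕ} [NeZero m] (hm : 3 ≤ m) : Fin m ≃ (cycleG m).edgeSet := Equiv.ofBijective _ (edgeF_bij hm)

lemma vol_QSet (m : ℕ) [NeZero m] (hm : 3 ≤ m) : volume (QSet (cycleG m)) = volume (Qcyc m) := by
  have h := volume_measurePreserving_piCongrLeft (fun _ : (cycleG m).edgeSet => ℝ) (edgeE hm)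
  have h2 : MeasurePreserving (MeasurableEquiv.prodCongr (MeasurableEquiv.refl (Fin m → ℝ))
    (MeasurableEquiv.piCongrLeft (fun _ : (cycleG m).edgeSet => ℝ) (edgeE hm))) volume volume :=
    (MeasurePreserving.id volume).prod h
  rw [← h2.measure_preimage_equiv]
  congr 1
  ext ⟨x, y⟩
  have hv : ∀ i, (MeasurableEquiv.piCongrLeft (fun _ : (cycleG m).edgeSet => ℝ) (edgeE hm)) y (edgeF hm i) = y i := by
    intro i
    exact Equiv.piCongrLeft_apply_apply (P := fun _ : (cycleG m).edgeSet => ℝ) (edgeE hm) y i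
  have hpre : (MeasurableEquiv.prodCongr (MeasurableEquiv.refl (Fin m → ℝ))
    (MeasurableEquiv.piCongrLeft (fun _ : (cycleG m).edgeSet => ℝ) (edgeE hm))) (x, y) =
    (x, (MeasurableEquiv.piCongrLeft (fun _ : (cycleG m).edgeSet => ℝ) (edgeE hm)) y) := rfl
  rw [Set.mem_preimage, hpre]
  generalize (MeasurableEquiv.piCongrLeft (fun _ : (cycleG m).edgeSet => ℝ) (edgeE hm)) y = w at hv
  change ((∀ i, x i ∈ Set.Icc (0 : ℝ) 1) ∧ (∀ e, w e ∈ Set.Icc (0 : ℝ) 1) ∧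
    ∀ (i j : Fin m) (h : (cycleG m).Adj i j),
      0 ≤ w ⟨s(i, j), (SimpleGraph.mem_edgeSet _).mpr h⟩ ∧
      w ⟨s(i, j), (SimpleGraph.mem_edgeSet _).mpr h⟩ ≤ x i ∧
      w ⟨s(i, j), (SimpleGraph.mem_edgeSet _).mpr h⟩ ≤ x j ∧
      x i + x j ≤ 1 + w ⟨s(i, j), (SimpleGraph.mem_edgeSet _).mpr h⟩) ↔
    ∀ i, 0 ≤ y i ∧ y i ≤ x i ∧ y i ≤ x (i+1) ∧ x i + x (i+1) ≤ 1 + y i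
  constructor
  · rintro ⟨-, -, h3⟩ i
    have := h3 i (i+1) (adj_succ hm i)
    rw [← hv i]
    exact this
  · intro h3
    have hx : ∀ i, x i ∈ Set.Icc (0 : ℝ) 1 := fun i => by
      obtain ⟨a, b, c, d⟩ := h3 i
      constructor <;> linarith
    refine ⟨hx, ?_, ?_⟩
    · intro e
      obtain ⟨i, rfl⟩ := (edgeF_bij hm).2 e
      rw [hv]
      have := (hx i).2
      obtain ⟨a, b, c, d⟩ := h3 i
      constructor <;> linarith
    · intro i j hij
      rcases adj_cases hm hij with h | h
      · subst h
        have := h3 i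
        rw [← hv i] at this
        exact this
      · subst h
        have := h3 j
        rw [← hv j] at this
        have e : (⟨s(j+1, j), (SimpleGraph.mem_edgeSet _).mpr hij⟩ : (cycleG m).edgeSet) = edgeF hm j :=
          Subtype.ext (by simp [edgeF, Sym2.eq_swap])
        rw [e]
        obtain ⟨a, b, c, d⟩ := this
        exact ⟨a, c, b, by linarith⟩

lemma vol_Zcyc_count (k : ℕ) : volume (Zcyc (k+1)) =
    (((k+1) * eulerNumber (2*k+1) : ℕ) : ENNReal) * ((2*(k+1)).factorial : ENNReal)⁻¹ := by
  have h := volume_measurePreserving_sumPiEquivProdPi (fun _ : Fin (k+1) ⊕ Fin (k+1) => ℝ)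
  rw [← h.measure_preimage_equiv]
  have hc : eulerNumber (2*k+1) = Nat.card {τ // altPred (2*k+1) τ} := rfl
  rw [hc, ← card_cfence_eq, ← volume_ordCell]
  refine volume_linext (by simp; omega) _ _ ?_ ?_
  · intro z hz i
    obtain ⟨h1, h2⟩ : (∀ i, z (.inl i) ∈ Set.Icc (0:ℝ) 1) ∧
      ∀ i, 0 ≤ z (.inr i) ∧ z (.inr i) ≤ z (.inl i) ∧ z (.inr i) ≤ z (.inl (i+1)) := hz
    rcases i with i | i
    · exact h1 i
    · exact ⟨(h2 i).1, (h2 i).2.1.trans (h1 i).2⟩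
  · intro σ z hz
    change ((∀ i, z (.inl i) ∈ Set.Icc (0:ℝ) 1) ∧
      ∀ i, 0 ≤ z (.inr i) ∧ z (.inr i) ≤ z (.inl i) ∧ z (.inr i) ≤ z (.inl (i+1))) ↔ _
    have key : ∀ i j, z (.inr i) ≤ z (.inl j) ↔ σ (.inr i) < σ (.inl j) := by
      intro i j
      constructor
      · intro hle
        by_contra hc
        have hne : σ (.inl j) ≠ σ (.inr i) := fun e => by simpa using σ.injective e
        exact absurd (hz.2 _ _ (lt_of_le_of_ne (not_lt.1 hc) hne)) (not_lt.2 hle)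
      · intro hlt
        exact (hz.2 _ _ hlt).le
    constructor
    · intro h i
      exact ⟨(key _ _).1 (h.2 i).2.1, (key _ _).1 (h.2 i).2.2⟩
    · intro h
      exact ⟨fun i => hz.1 _, fun i => ⟨(hz.1 _).1, (key _ _).2 (h i).1, (key _ _).2 (h i).2⟩⟩

/-- `vol Q(C_m) = m * A_{2m-1} / (2^m * (2m)!)`. -/
theorem volume_QSet_cycle (m : ℕ) (hm : 3 ≤ m) :
    volume (QSet (cycleG m)) = ((m * eulerNumber (2 * m - 1) : ℕ) : ENNReal) /
      ((2 : ENNReal) ^ m * (Nat.factorial (2 * m) : ENNReal)) := by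
  obtain ⟨k, rfl⟩ : ∃ k, m = k + 1 := ⟨m - 1, by omega⟩
  rw [vol_QSet (k+1) hm, vol_QZ, vol_Zcyc_count]
  have e : 2 * (k+1) - 1 = 2*k+1 := by omega
  rw [e, ENNReal.div_eq_inv_mul, ENNReal.mul_inv (by simp) (by simp), ENNReal.inv_pow]
  have h2 : ENNReal.ofReal (1/2) = 2⁻¹ := by
    rw [one_div, ENNReal.ofReal_inv_of_pos (by norm_num)]; simp
  rw [h2, mul_assoc, mul_comm (((2*(k+1)).factorial : ENNReal)⁻¹)]
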